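/- arXiv:1605.09569 — 2 statements merged into one kernel-verified Lean document; each statement's English description precedes it below -/
import Mathlib

section
/- Let j ≥ 1 be an integer and R > 1. Let v be a complex-valued function which is twice continuously differentiable on an open subset of ℝ² containing {x = (x₁,x₂) : 1 ≤ |x| ≤ R, x₁ ≥ 0}, with Δv = 0 on that open set, v(0, x₂) = 0 whenever 1 ≤ |x₂| ≤ R, and v(R cos t, R sin t) = R^j sin(j(π/2 − t)) for every t ∈ [−π/2, π/2]. Set φ(1) = ∫_{−π/2}^{π/2} v(cos t, sin t) sin(j(π/2 − t)) dt and let ∂_r v(x) = ∇v(x) · x/|x| denote the radial derivative. Then R^{j+1} ∫_{−π/2}^{π/2} ∂_r v(R cos t, R sin t) sin(j(π/2 − t)) dt = [j / (1 − R^{−2j})] · [ (π/2)(R^{2j} + 1) − 2 φ(1) ]. -/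
/-!
In the coordinates `(s, t) = (log |x|, arg x)` the function `v` is still harmonic, because the
Laplacian is conformally covariant in dimension two, and the half-annulus becomes a rectangle.
Green's second identity on that rectangle, applied to `v` and to the harmonic function
`sinh (j (s - s₀)) * sin (j (π / 2 - t))`, which vanishes on the inner side `s = s₀` and on both
sides `t = ± π / 2`, leaves a linear relation between the integrals of `∂_r v` and `v` on the
outer half-circle and of `v` on the inner one.
-/

open MeasureTheory Set Real
open scoped Interval

variable {E : Type*} [NormedAddCommGroup E] [NormedSpace ℝ E]

/-- The Laplacian on the coordinate plane `ℝ × ℝ`, as a sum of iterated partial derivatives.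
Mathlib's Laplacian needs an inner product space, and `ℝ × ℝ` carries the sup norm. -/
noncomputable def planeLaplacian (v : ℝ × ℝ → E) (x : ℝ × ℝ) : E :=
  fderiv ℝ (fun y => fderiv ℝ v y (1, 0)) x (1, 0) +
    fderiv ℝ (fun y => fderiv ℝ v y (0, 1)) x (0, 1)

lemma contDiffAt_fderiv_apply {v : ℝ × ℝ → E} {x : ℝ × ℝ} (hv : ContDiffAt ℝ 2 v x)
    (e : ℝ × ℝ) : ContDiffAt ℝ 1 (fun y => fderiv ℝ v y e) x :=
  (hv.fderiv_right (by norm_num)).clm_apply contDiffAt_const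

lemma planeLaplacian_eq_fderiv_fderiv {v : ℝ × ℝ → E} {x : ℝ × ℝ} (hv : ContDiffAt ℝ 2 v x) :
    planeLaplacian v x =
      fderiv ℝ (fderiv ℝ v) x (1, 0) (1, 0) + fderiv ℝ (fderiv ℝ v) x (0, 1) (0, 1) := by
  have hd : DifferentiableAt ℝ (fderiv ℝ v) x :=
    (hv.fderiv_right (m := 1) (by norm_num)).differentiableAt one_ne_zero
  simp [planeLaplacian, fderiv_clm_apply hd (differentiableAt_const _)]

section Green

lemma integral_divergence_rectangle {f g : ℝ × ℝ → E} {a₁ a₂ b₁ b₂ : ℝ}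
    (hf : ∀ x ∈ [[a₁, b₁]] ×ˢ [[a₂, b₂]], ContDiffAt ℝ 1 f x)
    (hg : ∀ x ∈ [[a₁, b₁]] ×ˢ [[a₂, b₂]], ContDiffAt ℝ 1 g x) :
    (∫ s in a₁..b₁, ∫ t in a₂..b₂, fderiv ℝ f (s, t) (1, 0) + fderiv ℝ g (s, t) (0, 1)) =
      (((∫ s in a₁..b₁, g (s, b₂)) - ∫ s in a₁..b₁, g (s, a₂)) +
        ∫ t in a₂..b₂, f (b₁, t)) - ∫ t in a₂..b₂, f (a₁, t) := by
  have hsub : Ioo (min a₁ b₁) (max a₁ b₁) ×ˢ Ioo (min a₂ b₂) (max a₂ b₂) ⊆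
      [[a₁, b₁]] ×ˢ [[a₂, b₂]] := prod_mono Ioo_subset_Icc_self Ioo_subset_Icc_self
  have hpartial {u : ℝ × ℝ → E} (hu : ∀ x ∈ [[a₁, b₁]] ×ˢ [[a₂, b₂]], ContDiffAt ℝ 1 u x)
      (e : ℝ × ℝ) : ContinuousOn (fun x => fderiv ℝ u x e) ([[a₁, b₁]] ×ˢ [[a₂, b₂]]) :=
    fun x hx => (((hu x hx).fderiv_right (m := 0) (by norm_num)).continuousAt.clm_apply
      continuousAt_const).continuousWithinAt
  exact integral2_divergence_prod_of_hasFDerivAt f g (fderiv ℝ f) (fderiv ℝ g) a₁ a₂ b₁ b₂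
    (fun x hx => (hf x hx).continuousAt.continuousWithinAt)
    (fun x hx => (hg x hx).continuousAt.continuousWithinAt)
    (fun x hx => ((hf x (hsub hx)).differentiableAt one_ne_zero).hasFDerivAt)
    (fun x hx => ((hg x (hsub hx)).differentiableAt one_ne_zero).hasFDerivAt)
    (((hpartial hf _).add (hpartial hg _)).integrableOn_compact
      (isCompact_uIcc.prod isCompact_uIcc))

variable {h : ℝ × ℝ → ℝ} {w : ℝ × ℝ → E}

lemma contDiffAt_smul_fderiv_sub_fderiv_smul {x : ℝ × ℝ} (hh : ContDiffAt ℝ 2 h x)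
    (hw : ContDiffAt ℝ 2 w x) (e : ℝ × ℝ) :
    ContDiffAt ℝ 1 (fun y => h y • fderiv ℝ w y e - fderiv ℝ h y e • w y) x :=
  ((hh.of_le one_le_two).smul (contDiffAt_fderiv_apply hw e)).sub
    ((contDiffAt_fderiv_apply hh e).smul (hw.of_le one_le_two))

lemma fderiv_smul_fderiv_sub_fderiv_smul {x : ℝ × ℝ} (hh : ContDiffAt ℝ 2 h x)
    (hw : ContDiffAt ℝ 2 w x) (e : ℝ × ℝ) :
    fderiv ℝ (fun y => h y • fderiv ℝ w y e - fderiv ℝ h y e • w y) x e =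
      h x • fderiv ℝ (fun y => fderiv ℝ w y e) x e -
        fderiv ℝ (fun y => fderiv ℝ h y e) x e • w x := by
  have hdh := (hh.differentiableAt two_ne_zero).hasFDerivAt
  have hdw := (hw.differentiableAt two_ne_zero).hasFDerivAt
  have hdh' := ((contDiffAt_fderiv_apply hh e).differentiableAt one_ne_zero).hasFDerivAt
  have hdw' := ((contDiffAt_fderiv_apply hw e).differentiableAt one_ne_zero).hasFDerivAt
  rw [((hdh.fun_smul hdw').fun_sub (hdh'.fun_smul hdw)).fderiv]
  simp only [sub_apply, add_apply, smul_apply,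
    ContinuousLinearMap.smulRight_apply]
  abel

theorem green_second_identity_rectangle {a₁ a₂ b₁ b₂ : ℝ}
    (hh : ∀ x ∈ [[a₁, b₁]] ×ˢ [[a₂, b₂]], ContDiffAt ℝ 2 h x)
    (hw : ∀ x ∈ [[a₁, b₁]] ×ˢ [[a₂, b₂]], ContDiffAt ℝ 2 w x) :
    (∫ s in a₁..b₁, ∫ t in a₂..b₂,
        h (s, t) • planeLaplacian w (s, t) - planeLaplacian h (s, t) • w (s, t)) =
      (((∫ s in a₁..b₁, h (s, b₂) • fderiv ℝ w (s, b₂) (0, 1) -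
          fderiv ℝ h (s, b₂) (0, 1) • w (s, b₂)) -
        ∫ s in a₁..b₁, h (s, a₂) • fderiv ℝ w (s, a₂) (0, 1) -
          fderiv ℝ h (s, a₂) (0, 1) • w (s, a₂)) +
        ∫ t in a₂..b₂, h (b₁, t) • fderiv ℝ w (b₁, t) (1, 0) -
          fderiv ℝ h (b₁, t) (1, 0) • w (b₁, t)) -
        ∫ t in a₂..b₂, h (a₁, t) • fderiv ℝ w (a₁, t) (1, 0) -
          fderiv ℝ h (a₁, t) (1, 0) • w (a₁, t) := by
  rw [← integral_divergence_rectangle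
    (fun x hx => contDiffAt_smul_fderiv_sub_fderiv_smul (hh x hx) (hw x hx) (1, 0))
    (fun x hx => contDiffAt_smul_fderiv_sub_fderiv_smul (hh x hx) (hw x hx) (0, 1))]
  refine intervalIntegral.integral_congr fun s hs => intervalIntegral.integral_congr fun t ht => ?_
  have hst : (s, t) ∈ [[a₁, b₁]] ×ˢ [[a₂, b₂]] := ⟨hs, ht⟩
  simp only [fderiv_smul_fderiv_sub_fderiv_smul (hh _ hst) (hw _ hst), planeLaplacian]
  module

end Green

section Strip

lemma fderiv_mul_separated {f g : ℝ → ℝ} {f' g' : ℝ} {x : ℝ × ℝ} (hf : HasDerivAt f f' x.1)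
    (hg : HasDerivAt g g' x.2) (e : ℝ × ℝ) :
    fderiv ℝ (fun y : ℝ × ℝ => f y.1 * g y.2) x e = e.1 * (f' * g x.2) + e.2 * (f x.1 * g') := by
  have hfst : HasFDerivAt (fun y : ℝ × ℝ => f y.1) (f' • .fst ℝ ℝ ℝ) x :=
    hf.comp_hasFDerivAt x hasFDerivAt_fst
  have hsnd : HasFDerivAt (fun y : ℝ × ℝ => g y.2) (g' • .snd ℝ ℝ ℝ) x :=
    hg.comp_hasFDerivAt x hasFDerivAt_snd
  rw [(hfst.fun_mul hsnd).fderiv]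
  simp only [add_apply, smul_apply, ContinuousLinearMap.coe_fst', ContinuousLinearMap.coe_snd',
    smul_eq_mul]
  ring

lemma planeLaplacian_mul_separated {f f' g g' : ℝ → ℝ} {f'' g'' : ℝ} {x : ℝ × ℝ}
    (hf : ∀ s, HasDerivAt f (f' s) s) (hf' : HasDerivAt f' f'' x.1)
    (hg : ∀ t, HasDerivAt g (g' t) t) (hg' : HasDerivAt g' g'' x.2) :
    planeLaplacian (fun y => f y.1 * g y.2) x = f'' * g x.2 + f x.1 * g'' := by
  simp only [planeLaplacian, fderiv_mul_separated (hf _) (hg _), one_mul, zero_mul, add_zero,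
    zero_add]
  rw [fderiv_mul_separated hf' (hg _), fderiv_mul_separated (hf _) hg']
  simp

/-- The harmonic function `sinh (m (s - a)) * sin (m (β - t))` of `(s, t)`, normalised to vanish
on the lines `s = a` and `t = β`. It serves as the test function in Green's identity. -/
noncomputable def sinhSin (m a β : ℝ) (x : ℝ × ℝ) : ℝ :=
  sinh (m * (x.1 - a)) * sin (m * (β - x.2))

lemma hasDerivAt_sinh_mul_sub (m a s : ℝ) :
    HasDerivAt (fun s => sinh (m * (s - a))) (m * cosh (m * (s - a))) s := by
  simpa [mul_comm] using (((hasDerivAt_id s).sub_const a).const_mul m).sinh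

lemma hasDerivAt_sin_mul_sub (m β t : ℝ) :
    HasDerivAt (fun t => sin (m * (β - t))) (-(m * cos (m * (β - t)))) t := by
  simpa [mul_comm] using (((hasDerivAt_id t).const_sub β).const_mul m).sin

lemma contDiff_sinhSin (m a β : ℝ) : ContDiff ℝ 2 (sinhSin m a β) := by
  unfold sinhSin
  fun_prop

lemma fderiv_sinhSin_fst (m a β : ℝ) (x : ℝ × ℝ) :
    fderiv ℝ (sinhSin m a β) x (1, 0) = m * cosh (m * (x.1 - a)) * sin (m * (β - x.2)) := by
  refine (fderiv_mul_separated (hasDerivAt_sinh_mul_sub m a x.1)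
    (hasDerivAt_sin_mul_sub m β x.2) (1, 0)).trans ?_
  simp

lemma planeLaplacian_sinhSin (m a β : ℝ) (x : ℝ × ℝ) :
    planeLaplacian (sinhSin m a β) x = 0 := by
  have hcosh : HasDerivAt (fun s => m * cosh (m * (s - a)))
      (m ^ 2 * sinh (m * (x.1 - a))) x.1 :=
    ((((hasDerivAt_id x.1).sub_const a).const_mul m).cosh.const_mul m).congr_deriv
      (by simp; ring)
  have hcos : HasDerivAt (fun t => -(m * cos (m * (β - t))))
      (-(m ^ 2 * sin (m * (β - x.2)))) x.2 :=
    ((((hasDerivAt_id x.2).const_sub β).const_mul m).cos.const_mul m).neg.congr_deriv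
      (by simp; ring)
  have hΔ := planeLaplacian_mul_separated (hasDerivAt_sinh_mul_sub m a) hcosh
    (hasDerivAt_sin_mul_sub m β) hcos
  exact hΔ.trans (by ring)

theorem sine_coefficient_relation_of_harmonic {m a b α β : ℝ} {u : ℝ × ℝ → E}
    (hm : sin (m * (β - α)) = 0)
    (hu : ∀ x ∈ [[a, b]] ×ˢ [[α, β]], ContDiffAt ℝ 2 u x)
    (hΔ : ∀ x ∈ [[a, b]] ×ˢ [[α, β]], planeLaplacian u x = 0)
    (hα : ∀ s ∈ [[a, b]], u (s, α) = 0) (hβ : ∀ s ∈ [[a, b]], u (s, β) = 0) :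
    sinh (m * (b - a)) • (∫ t in α..β, sin (m * (β - t)) • fderiv ℝ u (b, t) (1, 0)) =
      (m * cosh (m * (b - a))) • (∫ t in α..β, sin (m * (β - t)) • u (b, t)) -
        m • ∫ t in α..β, sin (m * (β - t)) • u (a, t) := by
  have hgreen := green_second_identity_rectangle
    (fun x _ => (contDiff_sinhSin m a β).contDiffAt) hu
  have hinterior : (∫ s in a..b, ∫ t in α..β, sinhSin m a β (s, t) • planeLaplacian u (s, t) -
      planeLaplacian (sinhSin m a β) (s, t) • u (s, t)) = 0 :=
    intervalIntegral.integral_zero_ae (.of_forall fun s hs =>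
      intervalIntegral.integral_zero_ae (.of_forall fun t ht => by
        rw [planeLaplacian_sinhSin, hΔ _ ⟨uIoc_subset_uIcc hs, uIoc_subset_uIcc ht⟩]
        simp))
  have hside {τ : ℝ} (hsin : sin (m * (β - τ)) = 0) (hτ : ∀ s ∈ [[a, b]], u (s, τ) = 0) :
      (∫ s in a..b, sinhSin m a β (s, τ) • fderiv ℝ u (s, τ) (0, 1) -
        fderiv ℝ (sinhSin m a β) (s, τ) (0, 1) • u (s, τ)) = 0 :=
    intervalIntegral.integral_zero_ae (.of_forall fun s hs => by
      simp [sinhSin, hsin, hτ s (uIoc_subset_uIcc hs)])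
  have hb : ∀ t ∈ [[α, β]], ContDiffAt ℝ 2 u (b, t) := fun t ht => hu _ ⟨right_mem_uIcc, ht⟩
  have hint {f : ℝ × ℝ → E} (hf : ∀ t ∈ [[α, β]], ContinuousAt f (b, t)) :
      IntervalIntegrable (fun t => sin (m * (β - t)) • f (b, t)) volume α β :=
    ContinuousOn.intervalIntegrable fun t ht => ContinuousAt.continuousWithinAt <|
      ContinuousAt.smul (by fun_prop)
        ((hf t ht).comp' (f := fun t => (b, t)) (by fun_prop))
  have hvalue := hint fun t ht => (hb t ht).continuousAt
  have hderiv := hint fun t ht => (contDiffAt_fderiv_apply (hb t ht) (1, 0)).continuousAt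
  rw [hinterior, hside (by simp) hβ, hside hm hα] at hgreen
  simp only [fderiv_sinhSin_fst, sinhSin, sub_self, mul_zero, sinh_zero, cosh_zero, zero_mul,
    zero_smul, zero_sub, mul_one, mul_smul, zero_add, intervalIntegral.integral_neg,
    intervalIntegral.integral_smul, sub_neg_eq_add] at hgreen
  have hsplit := intervalIntegral.integral_sub (hderiv.smul (sinh (m * (b - a))))
    ((hvalue.smul (cosh (m * (b - a)))).smul m)
  simp only [Pi.smul_apply, intervalIntegral.integral_smul] at hsplit
  rw [hsplit] at hgreen
  rw [mul_smul, eq_sub_iff_add_eq, ← sub_eq_zero, hgreen]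
  abel

end Strip

section LogPolar

/-- The conformal map `(s, t) ↦ e^s (cos t, sin t)`, that is, polar coordinates with the
logarithm of the radius as first variable. -/
noncomputable def logPolar (x : ℝ × ℝ) : ℝ × ℝ := exp x.1 • (cos x.2, sin x.2)

/-- The counterclockwise rotation of the plane by a right angle, which turns the radial derivative
of `logPolar` into its angular one. -/
def quarterTurn : ℝ × ℝ →L[ℝ] ℝ × ℝ :=
  (-ContinuousLinearMap.snd ℝ ℝ ℝ).prod (ContinuousLinearMap.fst ℝ ℝ ℝ)

lemma hasFDerivAt_logPolar (x : ℝ × ℝ) :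
    HasFDerivAt logPolar ((ContinuousLinearMap.fst ℝ ℝ ℝ).smulRight (logPolar x) +
      (ContinuousLinearMap.snd ℝ ℝ ℝ).smulRight (quarterTurn (logPolar x))) x := by
  have hfst : HasFDerivAt (fun x : ℝ × ℝ => x.1) (.fst ℝ ℝ ℝ) x := hasFDerivAt_fst
  have hsnd : HasFDerivAt (fun x : ℝ × ℝ => x.2) (.snd ℝ ℝ ℝ) x := hasFDerivAt_snd
  refine (hfst.exp.smul (hsnd.cos.prodMk hsnd.sin)).congr_fderiv ?_
  ext <;> simp [logPolar, quarterTurn]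

lemma contDiff_logPolar : ContDiff ℝ 2 logPolar := by
  unfold logPolar
  fun_prop

lemma fderiv_comp_logPolar {v : ℝ × ℝ → E} {x : ℝ × ℝ} (hv : DifferentiableAt ℝ v (logPolar x))
    (e : ℝ × ℝ) : fderiv ℝ (v ∘ logPolar) x e =
      fderiv ℝ v (logPolar x) (e.1 • logPolar x + e.2 • quarterTurn (logPolar x)) := by
  rw [(hv.hasFDerivAt.comp x (hasFDerivAt_logPolar x)).fderiv]
  simp

lemma bilin_apply_add_quarterTurn (L : ℝ × ℝ →L[ℝ] ℝ × ℝ →L[ℝ] E) (p : ℝ × ℝ) :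
    L p p + L (quarterTurn p) (quarterTurn p) =
      (p.1 ^ 2 + p.2 ^ 2) • (L (1, 0) (1, 0) + L (0, 1) (0, 1)) := by
  have hp : p = p.1 • ((1, 0) : ℝ × ℝ) + p.2 • ((0, 1) : ℝ × ℝ) := by simp
  have hq : quarterTurn p = -p.2 • ((1, 0) : ℝ × ℝ) + p.1 • ((0, 1) : ℝ × ℝ) := by
    simp [quarterTurn]
  rw [hq, congrArg₂ (fun q r => L q r) hp hp]
  simp only [map_add, map_smul, add_apply, smul_apply]
  module

lemma logPolar_sq_add_sq (x : ℝ × ℝ) : (logPolar x).1 ^ 2 + (logPolar x).2 ^ 2 = exp x.1 ^ 2 := by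
  simp only [logPolar, Prod.smul_mk, smul_eq_mul]
  linear_combination exp x.1 ^ 2 * cos_sq_add_sin_sq x.2

theorem planeLaplacian_comp_logPolar {v : ℝ × ℝ → E} {x : ℝ × ℝ}
    (hv : ContDiffAt ℝ 2 v (logPolar x)) :
    planeLaplacian (v ∘ logPolar) x = exp x.1 ^ 2 • planeLaplacian v (logPolar x) := by
  have hpartial (e : ℝ × ℝ) : (fun y => fderiv ℝ (v ∘ logPolar) y e) =ᶠ[nhds x] fun y =>
      fderiv ℝ v (logPolar y) (e.1 • logPolar y + e.2 • quarterTurn (logPolar y)) := by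
    filter_upwards [contDiff_logPolar.continuous.continuousAt.eventually
      (hv.eventually (by simp))] with y hy
    exact fderiv_comp_logPolar (hy.differentiableAt two_ne_zero) e
  have hP := hasFDerivAt_logPolar x
  have hdv : HasFDerivAt (fun y => fderiv ℝ v (logPolar y)) _ x :=
    ((hv.fderiv_right (m := 1) (by norm_num)).differentiableAt one_ne_zero).hasFDerivAt.comp x hP
  have hturn' : HasFDerivAt (fun y => quarterTurn (logPolar y)) _ x :=
    quarterTurn.hasFDerivAt.comp x hP
  have hturn : quarterTurn (quarterTurn (logPolar x)) = -logPolar x := by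
    simp [quarterTurn, Prod.ext_iff]
  have hLaplace := bilin_apply_add_quarterTurn (fderiv ℝ (fderiv ℝ v) (logPolar x)) (logPolar x)
  rw [logPolar_sq_add_sq, ← planeLaplacian_eq_fderiv_fderiv hv] at hLaplace
  rw [planeLaplacian, (hpartial _).fderiv_eq, (hpartial _).fderiv_eq]
  simp only [one_smul, zero_smul, add_zero, zero_add]
  rw [(hdv.clm_apply hP).fderiv, (hdv.clm_apply hturn').fderiv, ← hLaplace]
  simp only [ContinuousLinearMap.comp_add, ContinuousLinearMap.flip_add, add_apply,
    ContinuousLinearMap.comp_apply, ContinuousLinearMap.smulRight_apply,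
    ContinuousLinearMap.coe_fst', ContinuousLinearMap.coe_snd', ContinuousLinearMap.flip_apply,
    one_smul, zero_smul, map_zero, zero_apply, hturn, map_neg, add_zero, zero_add]
  abel

end LogPolar

section HalfAnnulus

/-- The closed half-annulus `{r ≤ |x| ≤ R, 0 ≤ x₁}`. The Euclidean norm is written out because
`ℝ × ℝ` carries the sup norm. -/
def halfAnnulus (r R : ℝ) : Set (ℝ × ℝ) :=
  {x | r ≤ √(x.1 ^ 2 + x.2 ^ 2) ∧ √(x.1 ^ 2 + x.2 ^ 2) ≤ R ∧ 0 ≤ x.1}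

lemma logPolar_mem_halfAnnulus {r R : ℝ} (hr : 0 < r) (hR : 0 < R) {x : ℝ × ℝ}
    (hs : x.1 ∈ Icc (log r) (log R)) (ht : x.2 ∈ Icc (-(π / 2)) (π / 2)) :
    logPolar x ∈ halfAnnulus r R := by
  rw [halfAnnulus, mem_ofPred_eq, logPolar_sq_add_sq, sqrt_sq (exp_pos _).le]
  exact ⟨(log_le_iff_le_exp hr).1 hs.1, (le_log_iff_exp_le hR).1 hs.2,
    mul_nonneg (exp_pos _).le (cos_nonneg_of_mem_Icc ht)⟩

theorem sinh_smul_integral_radial_of_harmonic (j : ℕ) {r R : ℝ} (hr : 0 < r) (hrR : r ≤ R)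
    {v : ℝ × ℝ → E} (hv : ∀ x ∈ halfAnnulus r R, ContDiffAt ℝ 2 v x)
    (hharm : ∀ x ∈ halfAnnulus r R, planeLaplacian v x = 0)
    (hbc : ∀ y : ℝ, r ≤ |y| → |y| ≤ R → v (0, y) = 0) :
    sinh (j * (log R - log r)) • R • (∫ t in (-(π / 2))..(π / 2),
        sin (j * (π / 2 - t)) • fderiv ℝ v (R * cos t, R * sin t) (cos t, sin t)) =
      (j * cosh (j * (log R - log r))) • (∫ t in (-(π / 2))..(π / 2),
        sin (j * (π / 2 - t)) • v (R * cos t, R * sin t)) -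
      (j : ℝ) • ∫ t in (-(π / 2))..(π / 2), sin (j * (π / 2 - t)) • v (r * cos t, r * sin t) := by
  have hR : 0 < R := hr.trans_le hrR
  have hpi : -(π / 2) ≤ π / 2 := neg_le_self pi_div_two_pos.le
  have hlog : log r ≤ log R := log_le_log hr hrR
  have hmem x (hx : x ∈ [[log r, log R]] ×ˢ [[-(π / 2), π / 2]]) :
      logPolar x ∈ halfAnnulus r R := by
    rw [uIcc_of_le hlog, uIcc_of_le hpi] at hx
    exact logPolar_mem_halfAnnulus hr hR hx.1 hx.2
  have hflat s (hs : s ∈ [[log r, log R]]) : v (0, exp s) = 0 ∧ v (0, -exp s) = 0 := by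
    rw [uIcc_of_le hlog] at hs
    have hrs := (log_le_iff_le_exp hr).1 hs.1
    have hsR := (le_log_iff_exp_le hR).1 hs.2
    constructor <;> apply hbc <;> simpa
  have hradial t (ht : t ∈ [[-(π / 2), π / 2]]) :
      fderiv ℝ (v ∘ logPolar) (log R, t) (1, 0) =
        R • fderiv ℝ v (R * cos t, R * sin t) (cos t, sin t) := by
    rw [fderiv_comp_logPolar ((hv _ (hmem _ ⟨right_mem_uIcc, ht⟩)).differentiableAt two_ne_zero),
      ← map_smul (fderiv ℝ v (R * cos t, R * sin t))]
    simp [logPolar, exp_log hR, -map_smul]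
  have hrel := sine_coefficient_relation_of_harmonic (m := j) (u := v ∘ logPolar)
    (a := log r) (b := log R) (α := -(π / 2)) (β := π / 2) (by simp [sin_nat_mul_pi])
    (fun x hx => (hv _ (hmem x hx)).comp x contDiff_logPolar.contDiffAt)
    (fun x hx => by
      rw [planeLaplacian_comp_logPolar (hv _ (hmem x hx)), hharm _ (hmem x hx), smul_zero])
    (fun s hs => by simpa [logPolar] using (hflat s hs).2)
    (fun s hs => by simpa [logPolar] using (hflat s hs).1)
  rw [intervalIntegral.integral_congr fun t ht => congrArg (sin (j * (π / 2 - t)) • ·)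
    (hradial t ht)] at hrel
  simpa only [Function.comp_apply, logPolar, exp_log hr, exp_log hR, Prod.smul_mk, smul_eq_mul,
    smul_comm _ R, intervalIntegral.integral_smul] using hrel

theorem flux_formula_general {j : ℕ} (hj : 1 ≤ j) {r R : ℝ} (hr : 0 < r) (hrR : r < R)
    {v : ℝ × ℝ → E} (hv : ∀ x ∈ halfAnnulus r R, ContDiffAt ℝ 2 v x)
    (hharm : ∀ x ∈ halfAnnulus r R, planeLaplacian v x = 0)
    (hbc : ∀ y : ℝ, r ≤ |y| → |y| ≤ R → v (0, y) = 0) :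
    R ^ (j + 1) • (∫ t in (-(π / 2))..(π / 2),
        sin (j * (π / 2 - t)) • fderiv ℝ v (R * cos t, R * sin t) (cos t, sin t)) =
      (j / (1 - (r / R) ^ (2 * j))) •
        ((R ^ j * (1 + (r / R) ^ (2 * j))) • (∫ t in (-(π / 2))..(π / 2),
            sin (j * (π / 2 - t)) • v (R * cos t, R * sin t)) -
          (2 * r ^ j) • ∫ t in (-(π / 2))..(π / 2),
            sin (j * (π / 2 - t)) • v (r * cos t, r * sin t)) := by
  have hR : 0 < R := hr.trans hrR
  have hrel := sinh_smul_integral_radial_of_harmonic j hr hrR.le hv hharm hbc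
  generalize (∫ t in (-(π / 2))..(π / 2), sin (j * (π / 2 - t)) •
    fderiv ℝ v (R * cos t, R * sin t) (cos t, sin t)) = A at hrel ⊢
  have hexp : exp (j * (log R - log r)) = R ^ j / r ^ j := by
    rw [← log_div hR.ne' hr.ne', exp_nat_mul, exp_log (div_pos hR hr), div_pow]
  have hsq : (R ^ j) ^ 2 - (r ^ j) ^ 2 ≠ 0 :=
    (sub_pos.2 (pow_lt_pow_left₀ (pow_lt_pow_left₀ hrR hr.le (by lia)) (by positivity)
      two_ne_zero)).ne'
  have hratio : (r / R) ^ (2 * j) = (r ^ j) ^ 2 / (R ^ j) ^ 2 := by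
    rw [div_pow, pow_mul', pow_mul']
  have hsinh : 2 * r ^ j / (1 - (r / R) ^ (2 * j)) * sinh (j * (log R - log r)) = R ^ j := by
    rw [sinh_eq, exp_neg, hexp, hratio]
    field_simp
  have hcosh : 2 * r ^ j * cosh (j * (log R - log r)) = R ^ j * (1 + (r / R) ^ (2 * j)) := by
    rw [cosh_eq, exp_neg, hexp, hratio]
    field_simp
  calc R ^ (j + 1) • A
      = (2 * r ^ j / (1 - (r / R) ^ (2 * j))) • sinh (j * (log R - log r)) • R • A := by
        rw [smul_smul, smul_smul, hsinh, pow_succ]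
    _ = _ := by
        rw [hrel, ← hcosh]
        module

end HalfAnnulus

lemma integral_sin_nat_mul_sq {j : ℕ} (hj : 1 ≤ j) :
    ∫ t in (-(π / 2))..(π / 2), sin (j * (π / 2 - t)) ^ 2 = π / 2 := by
  have hj0 : (j : ℝ) ≠ 0 := by positivity
  calc ∫ t in (-(π / 2))..(π / 2), sin (j * (π / 2 - t)) ^ 2
      = ∫ u in (0 : ℝ)..π, sin (j * u) ^ 2 := by
        simpa using intervalIntegral.integral_comp_sub_left (a := -(π / 2)) (b := π / 2)
          (fun u => sin (j * u) ^ 2) (π / 2)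
    _ = (j : ℝ)⁻¹ * ∫ u in (j * 0 : ℝ)..(j * π), sin u ^ 2 :=
        intervalIntegral.integral_comp_mul_left (fun u => sin u ^ 2) hj0
    _ = π / 2 := by
        simp only [integral_sin_sq, sin_nat_mul_pi, mul_zero, sin_zero]
        field_simp
        ring

lemma integral_sin_smul_of_eq_mul_sin {j : ℕ} (hj : 1 ≤ j) {f : ℝ → ℂ} {c : ℝ}
    (hf : ∀ t ∈ Icc (-(π / 2)) (π / 2), f t = ((c * sin (j * (π / 2 - t)) : ℝ) : ℂ)) :
    ∫ t in (-(π / 2))..(π / 2), sin (j * (π / 2 - t)) • f t = ((c * (π / 2) : ℝ) : ℂ) := by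
  calc ∫ t in (-(π / 2))..(π / 2), sin (j * (π / 2 - t)) • f t
      = ∫ t in (-(π / 2))..(π / 2), ((c * sin (j * (π / 2 - t)) ^ 2 : ℝ) : ℂ) := by
        refine intervalIntegral.integral_congr fun t ht => ?_
        rw [uIcc_of_le (neg_le_self pi_div_two_pos.le)] at ht
        simp only [hf t ht, Complex.real_smul]
        push_cast
        ring
    _ = ((c * (π / 2) : ℝ) : ℂ) := by
        rw [intervalIntegral.integral_ofReal, intervalIntegral.integral_const_mul,
          integral_sin_nat_mul_sq hj]

/-- Flux formula: for `v` harmonic on a half-annulus `{1 ≤ |x| ≤ R, x₁ ≥ 0}`, vanishing on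
the flat boundary parts and agreeing with `ψ_j` on the outer half-circle,
`R^{j+1} ∫ (∂_r v)(R cos t, R sin t) sin(j(π/2-t)) dt
  = (j/(1-R^{-2j})) ((π/2)(R^{2j}+1) - 2 φ(1))`. -/
theorem flux_formula (j : ℕ) (hj : 1 ≤ j) (R : ℝ) (hR : 1 < R)
    (U : Set (ℝ × ℝ)) (hU : IsOpen U)
    (hKU : {x : ℝ × ℝ | 1 ≤ Real.sqrt (x.1 ^ 2 + x.2 ^ 2)
        ∧ Real.sqrt (x.1 ^ 2 + x.2 ^ 2) ≤ R ∧ 0 ≤ x.1} ⊆ U)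
    (v : ℝ × ℝ → ℂ) (hv : ContDiffOn ℝ 2 v U)
    (hharm : ∀ x ∈ U,
      fderiv ℝ (fun y => fderiv ℝ v y (1, 0)) x (1, 0)
        + fderiv ℝ (fun y => fderiv ℝ v y (0, 1)) x (0, 1) = 0)
    (hbc : ∀ x₂ : ℝ, 1 ≤ |x₂| → |x₂| ≤ R → v (0, x₂) = 0)
    (houter : ∀ t ∈ Set.Icc (-(Real.pi / 2)) (Real.pi / 2),
      v (R * Real.cos t, R * Real.sin t)
        = ((R ^ j * Real.sin ((j : ℝ) * (Real.pi / 2 - t)) : ℝ) : ℂ))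
    (φ1 : ℂ)
    (hφ1 : φ1 = ∫ t in (-(Real.pi / 2))..(Real.pi / 2),
        v (Real.cos t, Real.sin t) * (Real.sin ((j : ℝ) * (Real.pi / 2 - t)) : ℂ)) :
    (R : ℂ) ^ (j + 1) * ∫ t in (-(Real.pi / 2))..(Real.pi / 2),
        (fderiv ℝ v (R * Real.cos t, R * Real.sin t) (Real.cos t, Real.sin t))
          * (Real.sin ((j : ℝ) * (Real.pi / 2 - t)) : ℂ)
      = ((j : ℂ) / (1 - ((R : ℂ) ^ (2 * j))⁻¹))
          * (((Real.pi / 2 : ℝ) : ℂ) * ((R : ℂ) ^ (2 * j) + 1) - 2 * φ1) := by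
  have hmain := flux_formula_general hj one_pos hR
    (fun x hx => hv.contDiffAt (hU.mem_nhds (hKU hx))) (fun x hx => hharm x (hKU hx)) hbc
  rw [integral_sin_smul_of_eq_mul_sin hj houter] at hmain
  simp only [Complex.real_smul, one_mul, one_pow, one_div, inv_pow, mul_one,
    mul_comm (Complex.ofReal (sin _)), ← hφ1] at hmain
  push_cast at hmain ⊢
  rw [hmain]
  have hR0 : (R : ℂ) ≠ 0 := by exact_mod_cast (one_pos.trans hR).ne'
  congr 1
  field_simp
  ring
end

section
/- Let a = (a₁, a₂) ∈ ℝ², r > 0, and let A_a(x) = (1/2)(−(x₂ − a₂), x₁ − a₁)/|x − a|². Then for every complex-valued function u which is smooth on an open neighborhood of the closed disk of center a and radius r and vanishes on a neighborhood of a, the Hardy-type inequality ∫_{D_r(a)} |i∇u(x) + A_a(x) u(x)|² dx ≥ (1/4) ∫_{D_r(a)} |u(x)|² / |x − a|² dx holds, where D_r(a) = {x ∈ ℝ² : |x − a| < r}. -/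
open MeasureTheory Set Real Filter Topology
open scoped ENNReal

/-!
The component of `(i∇ + A_a) u` tangent to the circle of center `a` and radius `ρ` is
`ρ⁻¹ (i ∂_θ + α) u`, where `α` is the circulation of `A_a`. Dropping the radial component, it is
enough to bound `(i ∂_θ + α)²` from below on each circle. The Fourier modes are eigenfunctions with
eigenvalues `(α - n)²`, `n ∈ ℤ`, so Parseval's identity gives the constant `dist(α, ℤ)²`, which is
`1/4` for `α = 1/2`. Integrating in polar coordinates yields the inequality on the disk.
-/

section Lintegral

variable {X : Type*} [MeasurableSpace X] {μ : Measure X}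

theorem lintegral_ofReal_div_const {c : ℝ} (hc : 0 < c) (f : X → ℝ) :
    ∫⁻ x, ENNReal.ofReal (f x / c) ∂μ = (∫⁻ x, ENNReal.ofReal (f x) ∂μ) / ENNReal.ofReal c := by
  simp only [ENNReal.ofReal_div_of_pos hc]
  simp only [div_eq_mul_inv]
  exact lintegral_mul_const' _ _ (ENNReal.inv_ne_top.2 (ENNReal.ofReal_pos.2 hc).ne')

theorem integral_le_integral_of_lintegral_ofReal_le
    {f g : X → ℝ} (hf : 0 ≤ᵐ[μ] f) (hg : 0 ≤ᵐ[μ] g) (hgi : Integrable g μ)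
    (h : ∫⁻ x, ENNReal.ofReal (f x) ∂μ ≤ ∫⁻ x, ENNReal.ofReal (g x) ∂μ) :
    ∫ x, f x ∂μ ≤ ∫ x, g x ∂μ := by
  by_cases hfi : Integrable f μ
  · rwa [← ofReal_integral_eq_lintegral_ofReal hfi hf, ← ofReal_integral_eq_lintegral_ofReal hgi hg,
      ENNReal.ofReal_le_ofReal_iff (integral_nonneg_of_ae hg)] at h
  · rw [integral_undef hfi]
    exact integral_nonneg_of_ae hg

end Lintegral

/-! ### The spectral gap on an interval with periodic boundary conditions -/

section Periodic

variable {a b : ℝ} (hab : a < b) {f g f' : ℝ → ℂ}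

theorem memLp_two_Ioc_of_continuousOn_Icc {E : Type*} [NormedAddCommGroup E] {f : ℝ → E}
    (hf : ContinuousOn f (Icc a b)) : MemLp f 2 (volume.restrict (Ioc a b)) :=
  ((memLp_two_iff_integrable_sq_norm (hf.aestronglyMeasurable measurableSet_Icc)).2
    (hf.norm.pow 2).integrableOn_Icc).mono_measure
      (Measure.restrict_mono_set _ Ioc_subset_Icc_self)

include hab

theorem fourierCoeffOn_add (hf : IntervalIntegrable f volume a b)
    (hg : IntervalIntegrable g volume a b) (n : ℤ) :
    fourierCoeffOn hab (fun t => f t + g t) n =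
      fourierCoeffOn hab f n + fourierCoeffOn hab g n := by
  have hfourier : Continuous fun x : ℝ => fourier (-n) (x : AddCircle (b - a)) :=
    (ContinuousMap.continuous _).comp (AddCircle.continuous_mk' _)
  simp only [fourierCoeffOn_eq_integral, smul_eq_mul, mul_add]
  rw [intervalIntegral.integral_add (hf.continuousOn_mul hfourier.continuousOn)
    (hg.continuousOn_mul hfourier.continuousOn), smul_add]

theorem fourierCoeffOn_deriv_of_eq_endpoints (hf : ∀ t ∈ Icc a b, HasDerivAt f (f' t) t)
    (hf' : IntervalIntegrable f' volume a b) (hper : f a = f b) (n : ℤ) :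
    fourierCoeffOn hab f' n =
      (2 * π / (b - a) * n : ℝ) * Complex.I * fourierCoeffOn hab f n := by
  rw [← uIcc_of_le hab.le] at hf
  rcases eq_or_ne n 0 with rfl | hn
  · simp [fourierCoeffOn_eq_integral, intervalIntegral.integral_eq_sub_of_hasDerivAt hf hf', hper]
  · have hn' : (n : ℂ) ≠ 0 := by exact_mod_cast hn
    have hπ : (π : ℂ) ≠ 0 := by exact_mod_cast pi_ne_zero
    have hba : (b - a : ℂ) ≠ 0 := by exact_mod_cast (sub_pos.2 hab).ne'
    rw [fourierCoeffOn_of_hasDerivAt hab hn hf hf', hper]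
    push_cast
    field_simp
    simp

theorem mul_integral_norm_sq_le_integral_norm_I_mul_deriv_add_sq {α c : ℝ}
    (hc : ∀ n : ℤ, c ≤ (α - 2 * π / (b - a) * n) ^ 2)
    (hf : ∀ t ∈ Icc a b, HasDerivAt f (f' t) t)
    (hf' : MemLp f' 2 (volume.restrict (Ioc a b))) (hper : f a = f b) :
    c * ∫ t in a..b, ‖f t‖ ^ 2 ≤ ∫ t in a..b, ‖Complex.I * f' t + α * f t‖ ^ 2 := by
  have hfc : ContinuousOn f (Icc a b) := fun t ht =>
    (hf t ht).continuousAt.continuousWithinAt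
  have hfL2 : MemLp f 2 (volume.restrict (Ioc a b)) :=
    memLp_two_Ioc_of_continuousOn_Icc hfc
  have hfint : IntervalIntegrable f volume a b :=
    (intervalIntegrable_iff_integrableOn_Ioc_of_le hab.le).2 (hfL2.integrable one_le_two)
  have hf'int : IntervalIntegrable f' volume a b :=
    (intervalIntegrable_iff_integrableOn_Ioc_of_le hab.le).2 (hf'.integrable one_le_two)
  have hcoeff (n : ℤ) : fourierCoeffOn hab (fun t => Complex.I * f' t + α * f t) n =
      (α - 2 * π / (b - a) * n : ℝ) * fourierCoeffOn hab f n := by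
    rw [fourierCoeffOn_add hab (hf'int.const_mul _) (hfint.const_mul _), fourierCoeffOn.const_mul,
      fourierCoeffOn.const_mul, fourierCoeffOn_deriv_of_eq_endpoints hab hf hf'int hper]
    push_cast
    linear_combination (2 * π / (b - a) * n) * fourierCoeffOn hab f n * Complex.I_mul_I
  have hmode (n : ℤ) : c * ‖fourierCoeffOn hab f n‖ ^ 2 ≤
      ‖fourierCoeffOn hab (fun t => Complex.I * f' t + α * f t) n‖ ^ 2 := by
    rw [hcoeff, norm_mul, mul_pow, Complex.norm_real, norm_eq_abs, sq_abs]
    exact mul_le_mul_of_nonneg_right (hc n) (sq_nonneg _)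
  have hparseval := hasSum_le hmode ((hasSum_sq_fourierCoeffOn hab hfL2).mul_left c)
    (hasSum_sq_fourierCoeffOn hab ((hf'.const_mul _).add (hfL2.const_mul _)))
  rw [smul_eq_mul, smul_eq_mul, mul_left_comm] at hparseval
  exact le_of_mul_le_mul_left hparseval (inv_pos.2 (sub_pos.2 hab))

theorem lintegral_mul_norm_sq_le_lintegral_norm_I_mul_deriv_add_sq {α c : ℝ} (hc₀ : 0 ≤ c)
    (hc : ∀ n : ℤ, c ≤ (α - 2 * π / (b - a) * n) ^ 2)
    (hf : ∀ t ∈ Icc a b, HasDerivAt f (f' t) t)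
    (hf' : MemLp f' 2 (volume.restrict (Ioc a b))) (hper : f a = f b) :
    ∫⁻ t in Ioc a b, ENNReal.ofReal (c * ‖f t‖ ^ 2) ≤
      ∫⁻ t in Ioc a b, ENNReal.ofReal (‖Complex.I * f' t + α * f t‖ ^ 2) := by
  have hfL2 : MemLp f 2 (volume.restrict (Ioc a b)) :=
    memLp_two_Ioc_of_continuousOn_Icc fun t ht => (hf t ht).continuousAt.continuousWithinAt
  have hDL2 : MemLp (fun t => Complex.I * f' t + α * f t) 2 (volume.restrict (Ioc a b)) :=
    (hf'.const_mul _).add (hfL2.const_mul _)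
  rw [← ofReal_integral_eq_lintegral_ofReal ((hfL2.integrable_norm_pow two_ne_zero).const_mul c)
      (ae_of_all _ fun t => by positivity),
    ← ofReal_integral_eq_lintegral_ofReal (hDL2.integrable_norm_pow two_ne_zero)
      (ae_of_all _ fun t => by positivity), integral_const_mul,
    ← intervalIntegral.integral_of_le hab.le, ← intervalIntegral.integral_of_le hab.le]
  exact ENNReal.ofReal_le_ofReal
    (mul_integral_norm_sq_le_integral_norm_I_mul_deriv_add_sq hab hc hf hf' hper)

end Periodic

/-! ### Magnetic energy -/

/-- The pointwise magnetic energy `|(i∇ + A) u|²` of `u` for the vector potential `A`. -/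
noncomputable def magneticEnergyDensity (A : ℝ × ℝ → ℝ × ℝ) (u : ℝ × ℝ → ℂ) (x : ℝ × ℝ) : ℝ :=
  ‖Complex.I * fderiv ℝ u x (1, 0) + (A x).1 * u x‖ ^ 2 +
    ‖Complex.I * fderiv ℝ u x (0, 1) + (A x).2 * u x‖ ^ 2

section MagneticEnergy

variable {A : ℝ × ℝ → ℝ × ℝ} {u : ℝ × ℝ → ℂ} {s : Set (ℝ × ℝ)}

theorem magneticEnergyDensity_nonneg (A : ℝ × ℝ → ℝ × ℝ) (u : ℝ × ℝ → ℂ) (x : ℝ × ℝ) :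
    0 ≤ magneticEnergyDensity A u x := by
  unfold magneticEnergyDensity
  positivity

theorem norm_smul_add_smul_sq_le {E : Type*} [SeminormedAddCommGroup E] [NormedSpace ℝ E]
    (p q : ℝ) (x y : E) :
    ‖p • x + q • y‖ ^ 2 ≤ (p ^ 2 + q ^ 2) * (‖x‖ ^ 2 + ‖y‖ ^ 2) := by
  have htriangle : ‖p • x + q • y‖ ≤ |p| * ‖x‖ + |q| * ‖y‖ := by
    simpa only [norm_smul, norm_eq_abs] using norm_add_le (p • x) (q • y)
  calc ‖p • x + q • y‖ ^ 2 ≤ (|p| * ‖x‖ + |q| * ‖y‖) ^ 2 := by gcongr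
    _ ≤ (|p| ^ 2 + |q| ^ 2) * (‖x‖ ^ 2 + ‖y‖ ^ 2) := by
      linarith [sq_nonneg (|p| * ‖y‖ - |q| * ‖x‖)]
    _ = (p ^ 2 + q ^ 2) * (‖x‖ ^ 2 + ‖y‖ ^ 2) := by simp only [sq_abs]

theorem norm_I_mul_fderiv_add_sq_le (A : ℝ × ℝ → ℝ × ℝ) (u : ℝ × ℝ → ℂ) (x v : ℝ × ℝ) :
    ‖Complex.I * fderiv ℝ u x v + ((A x).1 * v.1 + (A x).2 * v.2 : ℝ) * u x‖ ^ 2 ≤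
      (v.1 ^ 2 + v.2 ^ 2) * magneticEnergyDensity A u x := by
  have hv : fderiv ℝ u x v = v.1 * fderiv ℝ u x (1, 0) + v.2 * fderiv ℝ u x (0, 1) := by
    conv_lhs => rw [show v = v.1 • ((1, 0) : ℝ × ℝ) + v.2 • ((0, 1) : ℝ × ℝ) by simp]
    simp only [map_add, map_smul, Complex.real_smul]
  refine Eq.trans_le ?_ (norm_smul_add_smul_sq_le v.1 v.2 _ _)
  rw [hv, Complex.real_smul, Complex.real_smul]
  push_cast
  ring_nf

theorem continuousOn_magneticEnergyDensity (hs : IsOpen s) (hA : ContinuousOn A s)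
    (hu : ContDiffOn ℝ 1 u s) : ContinuousOn (magneticEnergyDensity A u) s := by
  have huc : ContinuousOn u s := hu.continuousOn
  have hdu : ContinuousOn (fderiv ℝ u) s := hu.continuousOn_fderiv_of_isOpen hs le_rfl
  unfold magneticEnergyDensity
  fun_prop

theorem magneticEnergyDensity_eventuallyEq_zero {x : ℝ × ℝ} (hu : u =ᶠ[𝓝 x] 0) :
    magneticEnergyDensity A u =ᶠ[𝓝 x] 0 := by
  filter_upwards [hu.eventuallyEq_nhds] with y hy
  simp [magneticEnergyDensity, hy.fderiv_eq, hy.eq_of_nhds]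

end MagneticEnergy

/-! ### Euclidean disks in polar coordinates -/

/-- The squared Euclidean distance in the plane. The distance of `ℝ × ℝ` in Mathlib is the sup
distance, so Euclidean distances have to be spelled out. -/
def euclideanSqDist (a x : ℝ × ℝ) : ℝ :=
  (x.1 - a.1) ^ 2 + (x.2 - a.2) ^ 2

/-- The open Euclidean disk `D_r(a)`, as opposed to the ball of the sup distance of `ℝ × ℝ`. -/
def euclideanDisk (a : ℝ × ℝ) (r : ℝ) : Set (ℝ × ℝ) :=
  {x | √(euclideanSqDist a x) < r}

/-- The closed Euclidean disk of center `a` and radius `r`. -/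
def euclideanClosedDisk (a : ℝ × ℝ) (r : ℝ) : Set (ℝ × ℝ) :=
  {x | √(euclideanSqDist a x) ≤ r}

section EuclideanDisk

variable {a x : ℝ × ℝ} {r : ℝ}

@[fun_prop]
theorem continuous_euclideanSqDist (a : ℝ × ℝ) : Continuous (euclideanSqDist a) := by
  unfold euclideanSqDist
  fun_prop

@[simp]
theorem euclideanSqDist_eq_zero : euclideanSqDist a x = 0 ↔ x = a := by
  rw [euclideanSqDist, add_eq_zero_iff_of_nonneg (sq_nonneg _) (sq_nonneg _), Prod.ext_iff]
  simp only [sq_eq_zero_iff, sub_eq_zero]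

theorem euclideanSqDist_nonneg (a x : ℝ × ℝ) : 0 ≤ euclideanSqDist a x :=
  add_nonneg (sq_nonneg _) (sq_nonneg _)

theorem euclideanDisk_subset_euclideanClosedDisk : euclideanDisk a r ⊆ euclideanClosedDisk a r :=
  fun _ (hx : _ < r) => hx.le

theorem isOpen_euclideanDisk (a : ℝ × ℝ) (r : ℝ) : IsOpen (euclideanDisk a r) :=
  isOpen_lt (by fun_prop) continuous_const

theorem euclideanDisk_mem_nhds_center (hr : 0 < r) : euclideanDisk a r ∈ 𝓝 a :=
  (isOpen_euclideanDisk a r).mem_nhds (by simpa [euclideanDisk, euclideanSqDist] using hr)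

theorem isCompact_euclideanClosedDisk (a : ℝ × ℝ) (r : ℝ) :
    IsCompact (euclideanClosedDisk a r) := by
  refine (isCompact_closedBall a r).of_isClosed_subset
    (isClosed_le (by fun_prop) continuous_const) fun x hx => ?_
  rw [Metric.mem_closedBall, Prod.dist_eq, Real.dist_eq, Real.dist_eq]
  exact (max_le (abs_le_sqrt (le_add_of_nonneg_right (sq_nonneg _)))
    (abs_le_sqrt (le_add_of_nonneg_left (sq_nonneg _)))).trans hx

theorem euclideanSqDist_add_polarCoord_symm (a p : ℝ × ℝ) :
    euclideanSqDist a (a + polarCoord.symm p) = p.1 ^ 2 := by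
  simp only [euclideanSqDist, polarCoord_symm_apply, Prod.fst_add, Prod.snd_add,
    add_sub_cancel_left]
  linear_combination p.1 ^ 2 * sin_sq_add_cos_sq p.2

theorem add_polarCoord_symm_mem_euclideanDisk_iff {p : ℝ × ℝ} (hp : 0 < p.1) :
    a + polarCoord.symm p ∈ euclideanDisk a r ↔ p.1 < r := by
  rw [euclideanDisk, mem_ofPred_eq, euclideanSqDist_add_polarCoord_symm, sqrt_sq hp.le]

theorem add_polarCoord_symm_mem_euclideanDisk_diff_center {p : ℝ × ℝ} (hp : p.1 ∈ Ioo 0 r) :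
    a + polarCoord.symm p ∈ euclideanDisk a r \ {a} := by
  refine ⟨(add_polarCoord_symm_mem_euclideanDisk_iff hp.1).2 hp.2, fun h => ?_⟩
  rw [mem_singleton_iff, ← euclideanSqDist_eq_zero, euclideanSqDist_add_polarCoord_symm] at h
  exact hp.1.ne' (sq_eq_zero_iff.1 h)

theorem hasDerivAt_add_polarCoord_symm (a : ℝ × ℝ) (ρ t : ℝ) :
    HasDerivAt (fun t => a + polarCoord.symm (ρ, t)) (-(ρ * sin t), ρ * cos t) t := by
  simp only [polarCoord_symm_apply]
  refine HasDerivAt.const_add a (HasDerivAt.prodMk ?_ ((hasDerivAt_sin t).const_mul ρ))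
  simpa only [mul_neg] using (hasDerivAt_cos t).const_mul ρ

theorem lintegral_euclideanDisk (a : ℝ × ℝ) (r : ℝ) (F : ℝ × ℝ → ℝ≥0∞) :
    ∫⁻ x in euclideanDisk a r, F x =
      ∫⁻ p in Ioo 0 r ×ˢ Ioo (-π) π, ENNReal.ofReal p.1 * F (a + polarCoord.symm p) := by
  have hset : (Iio r ×ˢ univ) ∩ polarCoord.target = Ioo 0 r ×ˢ Ioo (-π) π := by
    rw [polarCoord_target, prod_inter_prod, univ_inter, inter_comm, Ioi_inter_Iio]
  rw [← lintegral_indicator (isOpen_euclideanDisk a r).measurableSet,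
    ← lintegral_add_left_eq_self _ a, ← lintegral_comp_polarCoord_symm, ← hset,
    ← setLIntegral_indicator (measurableSet_Iio.prod MeasurableSet.univ)]
  refine setLIntegral_congr_fun polarCoord.open_target.measurableSet fun p hp => ?_
  simp [indicator, -polarCoord_symm_apply, add_polarCoord_symm_mem_euclideanDisk_iff hp.1]

theorem lintegral_euclideanDisk_mono_of_circles {F G : ℝ × ℝ → ℝ≥0∞}
    (hG : ContinuousOn G (euclideanDisk a r \ {a}))
    (h : ∀ ρ ∈ Ioo 0 r, ∫⁻ t in Ioo (-π) π, F (a + polarCoord.symm (ρ, t)) ≤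
      ∫⁻ t in Ioo (-π) π, G (a + polarCoord.symm (ρ, t))) :
    ∫⁻ x in euclideanDisk a r, F x ≤ ∫⁻ x in euclideanDisk a r, G x := by
  have hmeas : AEMeasurable (fun p => ENNReal.ofReal p.1 * G (a + polarCoord.symm p))
      (volume.restrict (Ioo 0 r ×ˢ Ioo (-π) π)) := by
    refine AEMeasurable.mul (by fun_prop) (ContinuousOn.aemeasurable ?_
      (measurableSet_Ioo.prod measurableSet_Ioo))
    exact hG.comp (continuous_const.add continuous_polarCoord_symm).continuousOn
      fun p hp => add_polarCoord_symm_mem_euclideanDisk_diff_center hp.1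
  rw [lintegral_euclideanDisk, lintegral_euclideanDisk]
  rw [Measure.volume_eq_prod] at hmeas ⊢
  rw [setLIntegral_prod _ hmeas, ← Measure.prod_restrict]
  refine (lintegral_prod_le _).trans (setLIntegral_mono' measurableSet_Ioo fun ρ hρ => ?_)
  simp only [lintegral_const_mul' _ _ ENNReal.ofReal_ne_top]
  exact mul_le_mul_right (h ρ hρ) _

end EuclideanDisk

/-! ### The Hardy inequality for the Aharonov–Bohm potential -/

/-- The Aharonov–Bohm vector potential `A_a` with pole `a` and circulation `α`; division by zero
gives it the value `0` at the pole. -/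
noncomputable def aharonovBohmPotential (α : ℝ) (a x : ℝ × ℝ) : ℝ × ℝ :=
  (α / euclideanSqDist a x) • (-(x.2 - a.2), x.1 - a.1)

section AharonovBohm

variable {α r ρ : ℝ} {a : ℝ × ℝ} {u : ℝ × ℝ → ℂ} {s : Set (ℝ × ℝ)}

theorem continuousOn_aharonovBohmPotential (α : ℝ) (a : ℝ × ℝ) :
    ContinuousOn (aharonovBohmPotential α a) {a}ᶜ := by
  have hne : ∀ x ∈ ({a} : Set (ℝ × ℝ))ᶜ, euclideanSqDist a x ≠ 0 := fun x hx =>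
    euclideanSqDist_eq_zero.not.2 hx
  unfold aharonovBohmPotential
  fun_prop (disch := assumption)

theorem norm_I_mul_fderiv_angular_add_sq_le (α : ℝ) (a : ℝ × ℝ) (u : ℝ × ℝ → ℂ)
    (hρ : ρ ≠ 0) (t : ℝ) :
    ‖Complex.I * fderiv ℝ u (a + polarCoord.symm (ρ, t)) (-(ρ * sin t), ρ * cos t) +
        α * u (a + polarCoord.symm (ρ, t))‖ ^ 2 ≤
      ρ ^ 2 * magneticEnergyDensity (aharonovBohmPotential α a) u
        (a + polarCoord.symm (ρ, t)) := by
  have hnorm : (-(ρ * sin t)) ^ 2 + (ρ * cos t) ^ 2 = ρ ^ 2 := by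
    linear_combination ρ ^ 2 * sin_sq_add_cos_sq t
  have hcirculation :
      (aharonovBohmPotential α a (a + polarCoord.symm (ρ, t))).1 * -(ρ * sin t) +
        (aharonovBohmPotential α a (a + polarCoord.symm (ρ, t))).2 * (ρ * cos t) = α := by
    rw [aharonovBohmPotential, euclideanSqDist_add_polarCoord_symm]
    simp only [polarCoord_symm_apply, Prod.fst_add, Prod.snd_add, add_sub_cancel_left,
      Prod.smul_mk, smul_eq_mul]
    field_simp
    linear_combination α * sin_sq_add_cos_sq t
  simpa only [hnorm, hcirculation] using norm_I_mul_fderiv_add_sq_le (aharonovBohmPotential α a) u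
    (a + polarCoord.symm (ρ, t)) (-(ρ * sin t), ρ * cos t)

theorem continuousOn_magneticEnergyDensity_aharonovBohm (hs : IsOpen s) (hu : ContDiffOn ℝ 1 u s) :
    ContinuousOn (magneticEnergyDensity (aharonovBohmPotential α a) u) (s \ {a}) :=
  continuousOn_magneticEnergyDensity (hs.sdiff isClosed_singleton)
    ((continuousOn_aharonovBohmPotential α a).mono fun _ hx => hx.2) (hu.mono sdiff_subset)

theorem lintegral_circle_hardy_aharonovBohm (hs : IsOpen s) (hu : ContDiffOn ℝ 1 u s) (hρ : 0 < ρ)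
    (hcircle : ∀ t, a + polarCoord.symm (ρ, t) ∈ s) :
    ∫⁻ t in Ioo (-π) π,
        ENNReal.ofReal ((α - round α) ^ 2 * ‖u (a + polarCoord.symm (ρ, t))‖ ^ 2 / ρ ^ 2) ≤
      ∫⁻ t in Ioo (-π) π, ENNReal.ofReal
        (magneticEnergyDensity (aharonovBohmPotential α a) u (a + polarCoord.symm (ρ, t))) := by
  set γ : ℝ → ℝ × ℝ := fun t => a + polarCoord.symm (ρ, t) with hγ
  set f' : ℝ → ℂ := fun t => fderiv ℝ u (γ t) (-(ρ * sin t), ρ * cos t)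
  have hf (t : ℝ) : HasDerivAt (u ∘ γ) (f' t) t :=
    ((hu.differentiableOn one_ne_zero).differentiableAt
      (hs.mem_nhds (hcircle t))).hasFDerivAt.comp_hasDerivAt t
        (hasDerivAt_add_polarCoord_symm a ρ t)
  have hf' : Continuous f' :=
    ((hu.continuousOn_fderiv_of_isOpen hs le_rfl).comp_continuous (by fun_prop) hcircle).clm_apply
      (by fun_prop)
  have hgap (n : ℤ) : (α - round α) ^ 2 ≤ (α - 2 * π / (π - -π) * n) ^ 2 := by
    rw [sub_neg_eq_add, ← two_mul, div_self two_pi_pos.ne', one_mul]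
    exact sq_le_sq.2 (round_le α n)
  have hperiodic := lintegral_mul_norm_sq_le_lintegral_norm_I_mul_deriv_add_sq
    (neg_lt_self pi_pos) (sq_nonneg _) hgap (fun t _ => hf t)
    (memLp_two_Ioc_of_continuousOn_Icc hf'.continuousOn) (by simp [hγ])
  rw [← restrict_Ioo_eq_restrict_Ioc] at hperiodic
  calc _ = (∫⁻ t in Ioo (-π) π, ENNReal.ofReal ((α - round α) ^ 2 * ‖u (γ t)‖ ^ 2)) /
        ENNReal.ofReal (ρ ^ 2) := lintegral_ofReal_div_const (pow_pos hρ 2) _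
    _ ≤ (∫⁻ t in Ioo (-π) π, ENNReal.ofReal (‖Complex.I * f' t + α * u (γ t)‖ ^ 2)) /
        ENNReal.ofReal (ρ ^ 2) := ENNReal.div_le_div_right hperiodic _
    _ = ∫⁻ t in Ioo (-π) π, ENNReal.ofReal (‖Complex.I * f' t + α * u (γ t)‖ ^ 2 / ρ ^ 2) :=
        (lintegral_ofReal_div_const (pow_pos hρ 2) _).symm
    _ ≤ _ := lintegral_mono fun t => ENNReal.ofReal_le_ofReal <|
        (div_le_iff₀' (pow_pos hρ 2)).2 (norm_I_mul_fderiv_angular_add_sq_le α a u hρ.ne' t)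

theorem lintegral_euclideanDisk_hardy_aharonovBohm
    (hu : ContDiffOn ℝ 1 u (euclideanDisk a r \ {a})) :
    ∫⁻ x in euclideanDisk a r,
        ENNReal.ofReal ((α - round α) ^ 2 * ‖u x‖ ^ 2 / euclideanSqDist a x) ≤
      ∫⁻ x in euclideanDisk a r,
        ENNReal.ofReal (magneticEnergyDensity (aharonovBohmPotential α a) u x) := by
  have hopen : IsOpen (euclideanDisk a r \ {a}) :=
    (isOpen_euclideanDisk a r).sdiff isClosed_singleton
  have henergy := continuousOn_magneticEnergyDensity_aharonovBohm (α := α) (a := a) hopen hu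
  rw [sdiff_idem] at henergy
  refine lintegral_euclideanDisk_mono_of_circles
    (ENNReal.continuous_ofReal.comp_continuousOn henergy) fun ρ hρ => ?_
  simp only [euclideanSqDist_add_polarCoord_symm]
  exact lintegral_circle_hardy_aharonovBohm hopen hu hρ.1 fun t =>
    add_polarCoord_symm_mem_euclideanDisk_diff_center hρ

theorem integrableOn_magneticEnergyDensity_aharonovBohm {ε : ℝ} (hs : IsOpen s)
    (hrs : euclideanClosedDisk a r ⊆ s) (hu : ContDiffOn ℝ 1 u s) (hε : 0 < ε)
    (hvan : ∀ x ∈ euclideanDisk a ε, u x = 0) :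
    IntegrableOn (magneticEnergyDensity (aharonovBohmPotential α a) u) (euclideanDisk a r) := by
  have hcont : ContinuousOn (magneticEnergyDensity (aharonovBohmPotential α a) u)
      (euclideanClosedDisk a r) := fun x hx => by
    refine ContinuousAt.continuousWithinAt ?_
    rcases eq_or_ne x a with rfl | hxa
    · exact continuousAt_const.congr (magneticEnergyDensity_eventuallyEq_zero <|
        mem_of_superset (euclideanDisk_mem_nhds_center hε) hvan).symm
    · exact (continuousOn_magneticEnergyDensity_aharonovBohm hs hu).continuousAt
        ((hs.sdiff isClosed_singleton).mem_nhds ⟨hrs hx, hxa⟩)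
  exact (hcont.integrableOn_compact (isCompact_euclideanClosedDisk a r)).mono_set
    euclideanDisk_subset_euclideanClosedDisk

theorem hardy_aharonov_bohm_disk_general (α : ℝ) (a : ℝ × ℝ) (r : ℝ) (u : ℝ × ℝ → ℂ)
    (hu : ContDiffOn ℝ 1 u (euclideanDisk a r \ {a}))
    (henergy : IntegrableOn (magneticEnergyDensity (aharonovBohmPotential α a) u)
      (euclideanDisk a r)) :
    ∫ x in euclideanDisk a r, magneticEnergyDensity (aharonovBohmPotential α a) u x ≥
      (α - round α) ^ 2 * ∫ x in euclideanDisk a r, ‖u x‖ ^ 2 / euclideanSqDist a x := by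
  rw [ge_iff_le, ← integral_const_mul]
  refine integral_le_integral_of_lintegral_ofReal_le
    (ae_of_all _ fun x => mul_nonneg (sq_nonneg _)
      (div_nonneg (sq_nonneg _) (euclideanSqDist_nonneg a x)))
    (ae_of_all _ (magneticEnergyDensity_nonneg _ u)) henergy ?_
  simpa only [mul_div_assoc] using lintegral_euclideanDisk_hardy_aharonovBohm hu

theorem aharonovBohmPotential_one_half (a x : ℝ × ℝ) :
    aharonovBohmPotential (1 / 2) a x =
      (-(x.2 - a.2) / (2 * euclideanSqDist a x), (x.1 - a.1) / (2 * euclideanSqDist a x)) := by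
  simp only [aharonovBohmPotential, div_div, Prod.smul_mk, smul_eq_mul, one_div_mul_eq_div]

end AharonovBohm

/-- Hardy-type inequality on a disk for the Aharonov–Bohm potential
`A_a(x) = (1/2)(-(x₂-a₂), x₁-a₁)/|x-a|²`: for `u` smooth on a neighborhood of the
closed disk `D_r(a)` and vanishing near `a`,
`∫_{D_r(a)} |i∇u + A_a u|² ≥ (1/4) ∫_{D_r(a)} |u|²/|x-a|²`. -/
theorem hardy_aharonov_bohm_disk (a : ℝ × ℝ) (r : ℝ) (hr : 0 < r)
    (U : Set (ℝ × ℝ)) (hU : IsOpen U)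
    (hUD : {x : ℝ × ℝ | Real.sqrt ((x.1 - a.1) ^ 2 + (x.2 - a.2) ^ 2) ≤ r} ⊆ U)
    (u : ℝ × ℝ → ℂ) (hu : ContDiffOn ℝ (⊤ : ℕ∞) u U)
    (hvan : ∃ ε : ℝ, 0 < ε ∧ ∀ x : ℝ × ℝ,
      Real.sqrt ((x.1 - a.1) ^ 2 + (x.2 - a.2) ^ 2) < ε → u x = 0) :
    (∫ x in {x : ℝ × ℝ | Real.sqrt ((x.1 - a.1) ^ 2 + (x.2 - a.2) ^ 2) < r},
        (‖Complex.I * fderiv ℝ u x (1, 0)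
            + ((-(x.2 - a.2) / (2 * ((x.1 - a.1) ^ 2 + (x.2 - a.2) ^ 2)) : ℝ) : ℂ) * u x‖ ^ 2
          + ‖Complex.I * fderiv ℝ u x (0, 1)
            + (((x.1 - a.1) / (2 * ((x.1 - a.1) ^ 2 + (x.2 - a.2) ^ 2)) : ℝ) : ℂ) * u x‖ ^ 2))
      ≥ (1 / 4) * ∫ x in {x : ℝ × ℝ | Real.sqrt ((x.1 - a.1) ^ 2 + (x.2 - a.2) ^ 2) < r},
          ‖u x‖ ^ 2 / ((x.1 - a.1) ^ 2 + (x.2 - a.2) ^ 2) := by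
  obtain ⟨ε, hε, hvan⟩ := hvan
  have hu₁ : ContDiffOn ℝ 1 u U := hu.of_le (by exact_mod_cast le_top)
  have hhardy := hardy_aharonov_bohm_disk_general (1 / 2) a r u
    (hu₁.mono (sdiff_subset.trans (euclideanDisk_subset_euclideanClosedDisk.trans hUD)))
    (integrableOn_magneticEnergyDensity_aharonovBohm hU hUD hu₁ hε hvan)
  have hconst : (1 / 2 - round (1 / 2 : ℝ) : ℝ) ^ 2 = 1 / 4 := by norm_num
  simpa only [hconst, magneticEnergyDensity, aharonovBohmPotential_one_half, euclideanDisk,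
    euclideanSqDist] using hhardy
end
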